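/- arXiv:1905.05465 — 2 statements merged into one kernel-verified Lean document; each statement's English description precedes it below -/
import Mathlib

section
/- Let K ∈ ℝ and N ∈ (1,∞). The mapping (0, D_{K,N}] ∋ D' ↦ (D')²·λ[h_{K,N,D'}] is non-increasing if K ≤ 0 and non-decreasing if K ≥ 0; in particular it is constant if K = 0. -/
open MeasureTheory Filter

/-- The function `s_κ` from the paper. -/
noncomputable def sKappa (κ θ : ℝ) : ℝ :=
  if 0 < κ then Real.sin (Real.sqrt κ * θ) / Real.sqrt κ
  else if κ < 0 then Real.sinh (Real.sqrt (-κ) * θ) / Real.sqrt (-κ)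
  else θ

/-- The support of the measure `h · 𝓛¹`. -/
noncomputable def measSupport (h : ℝ → ℝ) : Set ℝ :=
  {x : ℝ | ∀ ε > 0,
    0 < (MeasureTheory.volume.withDensity (fun y => ENNReal.ofReal (h y))) (Metric.ball x ε)}

/-- A one-dimensional `MCP(K,N)` density. -/
def IsMCPDensity (K N : ℝ) (h : ℝ → ℝ) : Prop :=
  (∀ x, 0 ≤ h x) ∧ MeasureTheory.LocallyIntegrable h MeasureTheory.volume ∧
  ∀ x₀ ∈ measSupport h, ∀ x₁ ∈ measSupport h,
    (0 < K → x₀ ≠ x₁ → |x₁ - x₀| < Real.pi / Real.sqrt (K / (N - 1))) ∧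
    ∀ t ∈ Set.Icc (0:ℝ) 1,
      (sKappa (K / (N - 1)) ((1 - t) * |x₁ - x₀|) / sKappa (K / (N - 1)) |x₁ - x₀|) ^ (N - 1)
          * h x₀
        ≤ h (t * x₁ + (1 - t) * x₀)

/-- The model density `h_{K,N,D}`. -/
noncomputable def modelDensity (K N D : ℝ) (x : ℝ) : ℝ :=
  if x ∈ Set.Icc 0 (D / 2) then sKappa (K / (N - 1)) (D - x) ^ (N - 1)
  else if x ∈ Set.Icc (D / 2) D then sKappa (K / (N - 1)) x ^ (N - 1)
  else 0

/-- Locally Lipschitz functions on a subset `I` of the reals. -/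
def LocLipschitzOn (f : ℝ → ℝ) (I : Set ℝ) : Prop :=
  ∀ x ∈ I, ∃ ε > 0, ∃ C : NNReal, LipschitzOnWith C f (I ∩ Metric.ball x ε)

/-- The local Lipschitz slope `|∇f|(x)` relative to `I`. -/
noncomputable def slopeOn (f : ℝ → ℝ) (I : Set ℝ) (x : ℝ) : ℝ :=
  Filter.limsup (fun y => |f y - f x| / |y - x|) (nhdsWithin x (I \ {x}))

/-- The Poincaré constant `λ[h, I]` of the density `h` on `I`. -/
noncomputable def poincareConst (h : ℝ → ℝ) (I : Set ℝ) : ℝ :=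
  sInf { r : ℝ | ∃ f : ℝ → ℝ, LocLipschitzOn f I ∧
    (∫ x in I, f x * h x) = 0 ∧
    (0 < ∫ x in I, (f x) ^ 2 * h x) ∧
    MeasureTheory.IntegrableOn (fun x => (f x) ^ 2 * h x) I ∧
    r = (∫ x in I, (slopeOn f I x) ^ 2 * h x) / (∫ x in I, (f x) ^ 2 * h x) }

/-!
After rescaling `[0, D]` to `[-1/2, 1/2]` the quantity `D² λ[h_{K,N,D}]` becomes the Poincaré
constant of an even density. For two diameters `A` and `B` with `κ B² ≤ κ A²`, where
`κ = K / (N - 1)`, Sturm comparison shows that the density for `A` is the one for `B` multiplied by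
a nonincreasing function of `|x|`, and such a multiplication does not decrease the Poincaré
constant of an even density `g`. Indeed, let `u` be locally Lipschitz with `u 0 = 0`. Truncating `u`
at `a > 0` and extending it oddly gives a function of vanishing mean, hence
`λ[g] ∫₀ᵃ u² g ≤ ∫₀ᵃ u'² g` for every `a`; averaging over `a` (layer cake) replaces `g` by any
nonincreasing multiple of it. For `f` of vanishing mean apply this to `u = f - f 0`, whose
`L²` norm is at least that of `f`.
-/

open Set Function
open scoped Topology Pointwise

section LocallyLipschitz

theorem locLipschitzOn_univ_iff {f : ℝ → ℝ} : LocLipschitzOn f univ ↔ LocallyLipschitz f := by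
  simp only [LocLipschitzOn, LocallyLipschitz, mem_univ, true_imp_iff, univ_inter]
  refine forall_congr' fun x => ⟨?_, ?_⟩
  · rintro ⟨ε, hε, C, hC⟩
    exact ⟨C, _, Metric.ball_mem_nhds x hε, hC⟩
  · rintro ⟨C, t, ht, hC⟩
    obtain ⟨ε, hε, hεt⟩ := Metric.mem_nhds_iff.1 ht
    exact ⟨ε, hε, C, hC.mono hεt⟩

theorem slopeOn_eq_abs_deriv {f : ℝ → ℝ} {I : Set ℝ} {x : ℝ} (hI : I ∈ 𝓝 x)
    (hf : DifferentiableAt ℝ f x) :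
    slopeOn f I x = |deriv f x| := by
  have hslope := (hasDerivAt_iff_tendsto_slope.1 hf.hasDerivAt).abs
  have hnhds : 𝓝[I \ {x}] x = 𝓝[≠] x := by
    rw [sdiff_eq, inter_comm, nhdsWithin_inter_of_mem' (mem_nhdsWithin_of_mem_nhds hI)]
  rw [slopeOn, hnhds]
  refine Tendsto.limsup_eq (hslope.congr fun y => ?_)
  rw [slope_def_field, abs_div]

variable {E F : Type*} [NormedAddCommGroup E] [NormedAddCommGroup F]

theorem ae_differentiableAt_of_locallyLipschitz [NormedSpace ℝ E] [NormedSpace ℝ F]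
    [FiniteDimensional ℝ E] [FiniteDimensional ℝ F] [MeasurableSpace E] [BorelSpace E]
    {μ : Measure E} [μ.IsAddHaarMeasure] {f : E → F} (hf : LocallyLipschitz f) :
    ∀ᵐ x ∂μ, DifferentiableAt ℝ f x := by
  refine measure_null_of_locally_null _ fun x _ => ?_
  obtain ⟨C, t, ht, hC⟩ := hf x
  refine ⟨_, inter_mem_nhdsWithin _ (interior_mem_nhds.2 ht), ?_⟩
  refine measure_mono_null ?_ (ae_iff.1 hC.ae_differentiableWithinAt_of_mem)
  rintro y ⟨hy, hyt⟩ hdiff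
  exact hy ((hdiff (interior_subset hyt)).differentiableAt (mem_interior_iff_mem_nhds.1 hyt))

theorem exists_norm_deriv_le_of_isCompact {𝕜 : Type*} [NontriviallyNormedField 𝕜]
    [LocallyCompactSpace 𝕜] [NormedSpace 𝕜 F] {f : 𝕜 → F} (hf : LocallyLipschitz f) {s : Set 𝕜}
    (hs : IsCompact s) : ∃ C, ∀ x ∈ s, ‖deriv f x‖ ≤ C := by
  obtain ⟨t, ht, hst⟩ := exists_compact_superset hs
  obtain ⟨C, hC⟩ := hf.locallyLipschitzOn.exists_lipschitzOnWith_of_compact ht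
  exact ⟨C, fun x hx => norm_deriv_le_of_lipschitzOn (mem_interior_iff_mem_nhds.1 (hst hx)) hC⟩

end LocallyLipschitz

section Poincare

/-- The Rayleigh quotients of the density `h` on the whole line. By Rademacher's theorem the slope
of a locally Lipschitz function may be replaced by its derivative, which is what is done here. -/
def rayleighQuotients (h : ℝ → ℝ) : Set ℝ :=
  {r : ℝ | ∃ f : ℝ → ℝ, LocallyLipschitz f ∧ ∫ x, f x * h x = 0 ∧
    0 < ∫ x, f x ^ 2 * h x ∧ Integrable (fun x => f x ^ 2 * h x) ∧
    r = (∫ x, deriv f x ^ 2 * h x) / ∫ x, f x ^ 2 * h x}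

variable {h : ℝ → ℝ}

theorem poincareConst_univ (h : ℝ → ℝ) : poincareConst h univ = sInf (rayleighQuotients h) := by
  rw [poincareConst, rayleighQuotients]
  congr 1
  ext r
  simp only [mem_ofPred_eq, locLipschitzOn_univ_iff, Measure.restrict_univ, integrableOn_univ]
  refine exists_congr fun f => and_congr_right fun hf => ?_
  have henergy : ∫ x, slopeOn f univ x ^ 2 * h x = ∫ x, deriv f x ^ 2 * h x := by
    refine integral_congr_ae ?_
    filter_upwards [ae_differentiableAt_of_locallyLipschitz hf] with x hx
    rw [slopeOn_eq_abs_deriv univ_mem hx, sq_abs]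
  rw [henergy]

theorem integral_sq_mul_nonneg (hh : ∀ x, 0 ≤ h x) (q : ℝ → ℝ) : 0 ≤ ∫ x, q x ^ 2 * h x :=
  integral_nonneg fun x => mul_nonneg (sq_nonneg _) (hh x)

theorem nonneg_of_mem_rayleighQuotients (hh : ∀ x, 0 ≤ h x) {r : ℝ}
    (hr : r ∈ rayleighQuotients h) : 0 ≤ r := by
  obtain ⟨f, -, -, hpos, -, rfl⟩ := hr
  exact div_nonneg (integral_sq_mul_nonneg hh _) hpos.le

theorem poincareConst_univ_nonneg (hh : ∀ x, 0 ≤ h x) : 0 ≤ poincareConst h univ := by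
  rw [poincareConst_univ]
  exact Real.sInf_nonneg fun _ => nonneg_of_mem_rayleighQuotients hh

theorem poincareConst_mul_integral_sq_le (hh : ∀ x, 0 ≤ h x) {v : ℝ → ℝ} (hv : LocallyLipschitz v)
    (hmean : ∫ x, v x * h x = 0) (hint : Integrable fun x => v x ^ 2 * h x) :
    poincareConst h univ * ∫ x, v x ^ 2 * h x ≤ ∫ x, deriv v x ^ 2 * h x := by
  rcases (integral_sq_mul_nonneg hh v).eq_or_lt with hzero | hpos
  · rw [← hzero, mul_zero]
    exact integral_sq_mul_nonneg hh _
  · rw [← le_div_iff₀ hpos, poincareConst_univ]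
    exact csInf_le ⟨0, fun _ => nonneg_of_mem_rayleighQuotients hh⟩
      ⟨v, hv, hmean, hpos, hint, rfl⟩

theorem le_poincareConst_univ {c : ℝ} (hne : (rayleighQuotients h).Nonempty)
    (hc : ∀ f : ℝ → ℝ, LocallyLipschitz f → ∫ x, f x * h x = 0 →
      Integrable (fun x => f x ^ 2 * h x) →
        c * ∫ x, f x ^ 2 * h x ≤ ∫ x, deriv f x ^ 2 * h x) :
    c ≤ poincareConst h univ := by
  rw [poincareConst_univ]
  refine le_csInf hne ?_
  rintro _ ⟨f, hf, hmean, hpos, hint, rfl⟩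
  exact (le_div_iff₀ hpos).2 (hc f hf hmean hint)

end Poincare

section AffineChange

variable {E : Type*} [NormedAddCommGroup E] [NormedSpace ℝ E]

theorem integral_comp_affine (g : ℝ → E) (c b : ℝ) :
    ∫ x, g (c * x + b) = |c⁻¹| • ∫ x, g x := by
  rw [Measure.integral_comp_mul_left (fun x => g (x + b)) c, integral_add_right_eq_self]

theorem deriv_comp_affine (f : ℝ → E) (c b x : ℝ) :
    deriv (fun x => f (c * x + b)) x = c • deriv f (c * x + b) := by
  have hmul := deriv_comp_mul_left c (fun x => f (x + b)) x
  rwa [deriv_comp_add_const] at hmul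

theorem mul_mem_rayleighQuotients_comp_affine {h : ℝ → ℝ} {c : ℝ} (hc : c ≠ 0) (b : ℝ) {r : ℝ}
    (hr : r ∈ rayleighQuotients h) :
    c ^ 2 * r ∈ rayleighQuotients fun x => h (c * x + b) := by
  obtain ⟨f, hf, hmean, hpos, hint, rfl⟩ := hr
  have haffine : LocallyLipschitz fun x : ℝ => c * x + b :=
    ContDiff.locallyLipschitz (𝕂 := ℝ) (by fun_prop)
  refine ⟨fun x => f (c * x + b), hf.comp haffine, ?_, ?_, ?_, ?_⟩
  · rw [integral_comp_affine fun x => f x * h x, hmean, smul_zero]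
  · rw [integral_comp_affine fun x => f x ^ 2 * h x]
    exact smul_pos (abs_pos.2 (inv_ne_zero hc)) hpos
  · exact (hint.comp_add_right b).comp_mul_left' hc
  · simp only [deriv_comp_affine, smul_eq_mul, mul_pow, mul_assoc]
    rw [integral_const_mul, integral_comp_affine fun x => f x ^ 2 * h x,
      integral_comp_affine fun x => deriv f x ^ 2 * h x, smul_eq_mul, smul_eq_mul]
    field_simp

theorem poincareConst_comp_affine (h : ℝ → ℝ) {c : ℝ} (hc : c ≠ 0) (b : ℝ) :
    poincareConst (fun x => h (c * x + b)) univ = c ^ 2 * poincareConst h univ := by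
  have hscale : rayleighQuotients (fun x => h (c * x + b)) =
      c ^ 2 • rayleighQuotients h := by
    refine Subset.antisymm (fun r hr => ?_) ?_
    · have hback :=
        mul_mem_rayleighQuotients_comp_affine (inv_ne_zero hc) (-(c⁻¹ * b)) hr
      have hinv (x : ℝ) : c * (c⁻¹ * x + -(c⁻¹ * b)) + b = x := by field_simp; ring
      simp only [hinv] at hback
      exact ⟨_, hback, by simp only [smul_eq_mul]; field_simp⟩
    · rintro _ ⟨r, hr, rfl⟩
      exact mul_mem_rayleighQuotients_comp_affine hc b hr
  rw [poincareConst_univ, poincareConst_univ, hscale, Real.sInf_smul_of_nonneg (sq_nonneg c),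
    smul_eq_mul]

end AffineChange

section StochasticOrder

variable {α : Type*} [LinearOrder α] [DenselyOrdered α] [TopologicalSpace α] [OrderTopology α]
  [SecondCountableTopology α] [MeasurableSpace α]

theorem measure_le_of_isLowerSet {μ ν : Measure α} (hμν : ∀ a, μ (Iic a) ≤ ν (Iic a)) {s : Set α}
    (hs : IsLowerSet s) : μ s ≤ ν s := by
  by_cases hmax : ∃ a, IsGreatest s a
  · obtain ⟨a, has, ha⟩ := hmax
    rw [Subset.antisymm ha (hs.Iic_subset has)]
    exact hμν a
  · obtain ⟨t, ht, htdense⟩ := TopologicalSpace.exists_countable_dense α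
    have hunion : s = ⋃ q ∈ t ∩ s, Iic q := by
      refine Subset.antisymm (fun x hx => ?_) (iUnion₂_subset fun q hq => hs.Iic_subset hq.2)
      obtain ⟨y, hy, hxy⟩ : ∃ y ∈ s, x < y := by
        by_contra! hle
        exact hmax ⟨x, hx, hle⟩
      obtain ⟨q, hqt, hxq, hqy⟩ := htdense.exists_between hxy
      exact mem_biUnion ⟨hqt, hs hqy.le hy⟩ hxq.le
    have hdir : DirectedOn ((· ⊆ ·) on Iic) (t ∩ s) := fun p hp q hq =>
      ⟨max p q, by rcases max_choice p q with h | h <;> rwa [h],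
        Iic_subset_Iic.2 (le_max_left p q), Iic_subset_Iic.2 (le_max_right p q)⟩
    rw [hunion, measure_biUnion_eq_iSup (ht.mono inter_subset_left) hdir,
      measure_biUnion_eq_iSup (ht.mono inter_subset_left) hdir]
    exact iSup₂_mono fun q _ => hμν q

theorem lintegral_le_lintegral_of_antitone [BorelSpace α] {μ ν : Measure α}
    (hμν : ∀ a, μ (Iic a) ≤ ν (Iic a)) {φ : α → ℝ} (hφ : Antitone φ) (hφ0 : ∀ x, 0 ≤ φ x) :
    ∫⁻ x, ENNReal.ofReal (φ x) ∂μ ≤ ∫⁻ x, ENNReal.ofReal (φ x) ∂ν := by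
  rw [lintegral_eq_lintegral_meas_lt μ (ae_of_all _ hφ0) hφ.measurable.aemeasurable,
    lintegral_eq_lintegral_meas_lt ν (ae_of_all _ hφ0) hφ.measurable.aemeasurable]
  exact lintegral_mono fun s =>
    measure_le_of_isLowerSet hμν fun x y hyx hx => lt_of_lt_of_le hx (hφ hyx)

theorem integral_mul_le_integral_mul_of_antitone [BorelSpace α] {μ : Measure α} {p q φ : α → ℝ}
    (hp : ∀ x, 0 ≤ p x) (hq : ∀ x, 0 ≤ q x) (hpi : Integrable p μ) (hqi : Integrable q μ)
    (hpq : ∀ a, ∫ x in Iic a, p x ∂μ ≤ ∫ x in Iic a, q x ∂μ)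
    (hφ : Antitone φ) (hφ0 : ∀ x, 0 ≤ φ x) (hφq : Integrable (fun x => φ x * q x) μ) :
    ∫ x, φ x * p x ∂μ ≤ ∫ x, φ x * q x ∂μ := by
  have hIic {r : α → ℝ} (hr : ∀ x, 0 ≤ r x) (hri : Integrable r μ) (a : α) :
      μ.withDensity (fun x => ENNReal.ofReal (r x)) (Iic a) =
        ENNReal.ofReal (∫ x in Iic a, r x ∂μ) := by
    rw [withDensity_apply _ measurableSet_Iic,
      ofReal_integral_eq_lintegral_ofReal hri.restrict (ae_of_all _ hr)]
  have hlintegral {r : α → ℝ} (hr : ∀ x, 0 ≤ r x) (hri : Integrable r μ) :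
      ∫⁻ x, ENNReal.ofReal (φ x * r x) ∂μ =
        ∫⁻ x, ENNReal.ofReal (φ x) ∂(μ.withDensity fun x => ENNReal.ofReal (r x)) := by
    rw [lintegral_withDensity_eq_lintegral_mul₀ hri.1.aemeasurable.ennreal_ofReal
      hφ.measurable.ennreal_ofReal.aemeasurable]
    refine lintegral_congr fun x => ?_
    rw [Pi.mul_apply, ← ENNReal.ofReal_mul (hr x), mul_comm]
  rw [integral_eq_lintegral_of_nonneg_ae (ae_of_all _ fun x => mul_nonneg (hφ0 x) (hp x))
      (hφ.measurable.aestronglyMeasurable.mul hpi.1),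
    integral_eq_lintegral_of_nonneg_ae (ae_of_all _ fun x => mul_nonneg (hφ0 x) (hq x)) hφq.1]
  refine ENNReal.toReal_mono hφq.lintegral_lt_top.ne ?_
  rw [hlintegral hp hpi, hlintegral hq hqi]
  refine lintegral_le_lintegral_of_antitone (fun a => ?_) hφ hφ0
  rw [hIic hp hpi, hIic hq hqi]
  exact ENNReal.ofReal_le_ofReal (hpq a)

end StochasticOrder

section Parity

variable {E : Type*} [NormedAddCommGroup E] [NormedSpace ℝ E]

theorem integral_eq_zero_of_odd {G : Type*} [AddGroup G] [MeasurableSpace G] [MeasurableNeg G]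
    {μ : Measure G} [μ.IsNegInvariant] {F : G → E} (hF : F.Odd) : ∫ x, F x ∂μ = 0 := by
  have : IsAddTorsionFree E := .of_isTorsionFree ℝ E
  have hneg := integral_neg_eq_self F μ
  simp only [hF.eq, integral_neg] at hneg
  exact neg_eq_self.1 hneg

theorem integral_eq_integral_Ioi_neg_add_integral_Ioi {F : ℝ → E} (hF : Integrable F) :
    ∫ x, F x = (∫ x in Ioi 0, F (-x)) + ∫ x in Ioi 0, F x := by
  rw [integral_comp_neg_Ioi, neg_zero,
    intervalIntegral.integral_Iic_add_Ioi hF.integrableOn hF.integrableOn]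

theorem even_deriv_of_odd {𝕜 F : Type*} [NontriviallyNormedField 𝕜] [NormedAddCommGroup F]
    [NormedSpace 𝕜 F] {f : 𝕜 → F} (hf : f.Odd) : (deriv f).Even := fun x => by
  have hneg := deriv_comp_neg f x
  rw [funext hf, deriv.fun_neg] at hneg
  exact (neg_injective hneg).symm

end Parity

/-- Nonnegative integrable densities with compact support. Compactness of the support makes every
locally Lipschitz function have finite energy, so that the Bochner integrals in the Poincaré
constant are not junk values. -/
structure IsCompactDensity (g : ℝ → ℝ) : Prop where
  nonneg : ∀ x, 0 ≤ g x
  integrable : Integrable g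
  hasCompactSupport : HasCompactSupport g

/-- Compactly supported integrable densities that are symmetric about the origin. -/
structure IsEvenDensity (g : ℝ → ℝ) : Prop extends IsCompactDensity g where
  even : g.Even

/-- The odd function that agrees with `u` on `[0, a]` and is constant on `[a, ∞)`, provided that
`0 ≤ a` and `u 0 = 0`. -/
def oddTruncation (u : ℝ → ℝ) (a x : ℝ) : ℝ :=
  u (max 0 (min x a)) - u (max 0 (min (-x) a))

section OddTruncation

variable {u : ℝ → ℝ} {a x : ℝ}

theorem locallyLipschitz_oddTruncation (hu : LocallyLipschitz u) (a : ℝ) :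
    LocallyLipschitz (oddTruncation u a) :=
  (hu.comp ((LocallyLipschitz.id.min_const a).const_max 0)).sub
    (hu.comp ((LocallyLipschitz.id.neg.min_const a).const_max 0))

theorem odd_oddTruncation (u : ℝ → ℝ) (a : ℝ) : (oddTruncation u a).Odd := fun x => by
  simp only [oddTruncation, neg_neg, neg_sub]

theorem oddTruncation_of_pos (hu0 : u 0 = 0) (ha : 0 ≤ a) (hx : 0 < x) :
    oddTruncation u a x = u (min x a) := by
  rw [oddTruncation, max_eq_right (le_min hx.le ha),
    max_eq_left ((min_le_left _ _).trans (neg_nonpos.2 hx.le)), hu0, sub_zero]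

theorem deriv_oddTruncation_of_mem_Ioo (hu0 : u 0 = 0) (hx : x ∈ Ioo 0 a) :
    deriv (oddTruncation u a) x = deriv u x := by
  refine EventuallyEq.deriv_eq ?_
  filter_upwards [Ioo_mem_nhds hx.1 hx.2] with y hy
  rw [oddTruncation_of_pos hu0 (hy.1.trans hy.2).le hy.1, min_eq_left hy.2.le]

theorem deriv_oddTruncation_of_lt (hu0 : u 0 = 0) (ha : 0 ≤ a) (hx : a < x) :
    deriv (oddTruncation u a) x = 0 := by
  have hconst : oddTruncation u a =ᶠ[𝓝 x] fun _ => u a := by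
    filter_upwards [Ioi_mem_nhds hx] with y hy
    rw [oddTruncation_of_pos hu0 ha (ha.trans_lt hy), min_eq_right (le_of_lt hy)]
  rw [hconst.deriv_eq, deriv_const]

theorem setIntegral_Ioi_deriv_oddTruncation_sq_mul (hu0 : u 0 = 0) (ha : 0 ≤ a) (g : ℝ → ℝ) :
    ∫ x in Ioi 0, deriv (oddTruncation u a) x ^ 2 * g x =
      ∫ x in Ioc 0 a, deriv u x ^ 2 * g x := by
  calc ∫ x in Ioi 0, deriv (oddTruncation u a) x ^ 2 * g x
      = ∫ x in Ioc 0 a, deriv (oddTruncation u a) x ^ 2 * g x := by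
        refine setIntegral_eq_of_subset_of_forall_sdiff_eq_zero measurableSet_Ioi
          Ioc_subset_Ioi_self fun x hx => ?_
        have hax : a < x := not_le.1 fun hxa => hx.2 ⟨hx.1, hxa⟩
        rw [deriv_oddTruncation_of_lt hu0 ha hax, zero_pow two_ne_zero, zero_mul]
    _ = ∫ x in Ioo 0 a, deriv (oddTruncation u a) x ^ 2 * g x := integral_Ioc_eq_integral_Ioo
    _ = ∫ x in Ioo 0 a, deriv u x ^ 2 * g x :=
        setIntegral_congr_fun measurableSet_Ioo fun x hx => by
          simp only [deriv_oddTruncation_of_mem_Ioo hu0 hx]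
    _ = ∫ x in Ioc 0 a, deriv u x ^ 2 * g x := integral_Ioc_eq_integral_Ioo.symm

end OddTruncation

namespace IsCompactDensity

variable {g u : ℝ → ℝ}

theorem integrable_mul_of_bounded (hg : IsCompactDensity g) {q : ℝ → ℝ} (hq : Measurable q)
    (hbdd : ∃ C, ∀ x ∈ tsupport g, |q x| ≤ C) : Integrable fun x => q x * g x := by
  obtain ⟨C, hC⟩ := hbdd
  refine (hg.integrable.const_mul C).mono' (hq.aestronglyMeasurable.mul hg.integrable.1)
    (ae_of_all _ fun x => ?_)
  rw [Real.norm_eq_abs, abs_mul, abs_of_nonneg (hg.nonneg x)]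
  by_cases hx : x ∈ tsupport g
  · exact mul_le_mul_of_nonneg_right (hC x hx) (hg.nonneg x)
  · simp only [image_eq_zero_of_notMem_tsupport hx, mul_zero, le_refl]

theorem integrable_mul_of_continuous (hg : IsCompactDensity g) {q : ℝ → ℝ} (hq : Continuous q) :
    Integrable fun x => q x * g x :=
  hg.integrable_mul_of_bounded hq.measurable
    (hg.hasCompactSupport.isCompact.exists_bound_of_continuousOn hq.continuousOn)

theorem integrable_sq_mul (hg : IsCompactDensity g) (hu : LocallyLipschitz u) :
    Integrable fun x => u x ^ 2 * g x :=
  hg.integrable_mul_of_continuous (hu.continuous.pow 2)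

theorem integrable_deriv_sq_mul (hg : IsCompactDensity g) (hu : LocallyLipschitz u) :
    Integrable fun x => deriv u x ^ 2 * g x := by
  obtain ⟨C, hC⟩ := exists_norm_deriv_le_of_isCompact hu hg.hasCompactSupport.isCompact
  refine hg.integrable_mul_of_bounded ((measurable_deriv u).pow_const 2) ⟨C ^ 2, fun x hx => ?_⟩
  rw [abs_pow]
  exact pow_le_pow_left₀ (abs_nonneg _) (hC x hx) 2

theorem integral_sq_mul_le_integral_sub_const_sq_mul (hg : IsCompactDensity g)
    (hu : LocallyLipschitz u) (hmean : ∫ x, u x * g x = 0) (c : ℝ) :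
    ∫ x, u x ^ 2 * g x ≤ ∫ x, (u x - c) ^ 2 * g x := by
  have hsq := hg.integrable_sq_mul hu
  have hlin := (hg.integrable_mul_of_continuous hu.continuous).const_mul (2 * c)
  have hdiff : Integrable fun x => u x ^ 2 * g x - 2 * c * (u x * g x) := hsq.sub hlin
  calc ∫ x, u x ^ 2 * g x ≤ (∫ x, u x ^ 2 * g x) + ∫ x, c ^ 2 * g x :=
        le_add_of_nonneg_right (integral_sq_mul_nonneg hg.nonneg _)
    _ = ((∫ x, u x ^ 2 * g x) - ∫ x, 2 * c * (u x * g x)) + ∫ x, c ^ 2 * g x := by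
        rw [integral_const_mul (2 * c), hmean, mul_zero, sub_zero]
    _ = ∫ x, (u x ^ 2 * g x - 2 * c * (u x * g x) + c ^ 2 * g x) := by
        rw [integral_add hdiff (hg.integrable.const_mul _), integral_sub hsq hlin]
    _ = ∫ x, (u x - c) ^ 2 * g x := integral_congr_ae (ae_of_all _ fun x => by ring)

end IsCompactDensity

namespace IsEvenDensity

variable {g u φ : ℝ → ℝ}

theorem comp_abs_mul (hg : IsEvenDensity g) (hφ : Antitone φ) (hφ0 : ∀ t, 0 ≤ φ t) :
    IsEvenDensity fun x => φ |x| * g x where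
  nonneg x := mul_nonneg (hφ0 _) (hg.nonneg x)
  even x := by simp only [abs_neg, hg.even.eq]
  integrable := hg.integrable_mul_of_bounded (hφ.measurable.comp measurable_id.abs)
    ⟨φ 0, fun x _ => by rw [abs_of_nonneg (hφ0 _)]; exact hφ (abs_nonneg x)⟩
  hasCompactSupport := hg.hasCompactSupport.mul_left

theorem poincareConst_mul_setIntegral_Ioc_sq_le (hg : IsEvenDensity g) (hu : LocallyLipschitz u)
    (hu0 : u 0 = 0) {a : ℝ} (ha : 0 ≤ a) :
    poincareConst g univ * ∫ x in Ioc 0 a, u x ^ 2 * g x ≤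
      ∫ x in Ioc 0 a, deriv u x ^ 2 * g x := by
  set v := oddTruncation u a
  have hv : LocallyLipschitz v := locallyLipschitz_oddTruncation hu a
  have hodd : v.Odd := odd_oddTruncation u a
  have hpoincare := poincareConst_mul_integral_sq_le hg.nonneg hv
    (integral_eq_zero_of_odd (hodd.mul_even hg.even)) (hg.integrable_sq_mul hv)
  rw [integral_eq_integral_Ioi_neg_add_integral_Ioi (hg.integrable_sq_mul hv),
    integral_eq_integral_Ioi_neg_add_integral_Ioi (hg.integrable_deriv_sq_mul hv)] at hpoincare
  simp only [hodd.eq, (even_deriv_of_odd hodd).eq, hg.even.eq, neg_sq] at hpoincare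
  calc poincareConst g univ * ∫ x in Ioc 0 a, u x ^ 2 * g x
      = poincareConst g univ * ∫ x in Ioc 0 a, v x ^ 2 * g x := by
        congr 1
        refine setIntegral_congr_fun measurableSet_Ioc fun x hx => ?_
        simp only [v, oddTruncation_of_pos hu0 ha hx.1, min_eq_left hx.2]
    _ ≤ poincareConst g univ * ∫ x in Ioi 0, v x ^ 2 * g x :=
        mul_le_mul_of_nonneg_left
          (setIntegral_mono_set (hg.integrable_sq_mul hv).integrableOn
            (ae_of_all _ fun x => mul_nonneg (sq_nonneg _) (hg.nonneg x))
            Ioc_subset_Ioi_self.eventuallyLE)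
          (poincareConst_univ_nonneg hg.nonneg)
    _ ≤ ∫ x in Ioi 0, deriv v x ^ 2 * g x := by linarith
    _ = ∫ x in Ioc 0 a, deriv u x ^ 2 * g x :=
        setIntegral_Ioi_deriv_oddTruncation_sq_mul hu0 ha g

theorem poincareConst_mul_setIntegral_Ioi_sq_le (hg : IsEvenDensity g) (hφ : Antitone φ)
    (hφ0 : ∀ t, 0 ≤ φ t) (hu : LocallyLipschitz u) (hu0 : u 0 = 0) :
    poincareConst g univ * ∫ x in Ioi 0, u x ^ 2 * (φ |x| * g x) ≤
      ∫ x in Ioi 0, deriv u x ^ 2 * (φ |x| * g x) := by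
  have hφ_abs (q : ℝ → ℝ) : EqOn (fun x => q x * (φ |x| * g x)) (fun x => φ x * (q x * g x))
      (Ioi 0) := fun x hx => by
    simp only [abs_of_pos (mem_Ioi.1 hx), mul_left_comm]
  have hc := poincareConst_univ_nonneg hg.nonneg
  have hφq : IntegrableOn (fun x => φ x * (deriv u x ^ 2 * g x)) (Ioi 0) :=
    ((hg.comp_abs_mul hφ hφ0).integrable_deriv_sq_mul hu).integrableOn.congr_fun (hφ_abs _)
      measurableSet_Ioi
  rw [setIntegral_congr_fun measurableSet_Ioi (hφ_abs _),
    setIntegral_congr_fun measurableSet_Ioi (hφ_abs _), ← integral_const_mul]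
  simp_rw [mul_left_comm (poincareConst g univ) (φ _)]
  refine integral_mul_le_integral_mul_of_antitone
    (fun x => mul_nonneg hc (mul_nonneg (sq_nonneg _) (hg.nonneg x)))
    (fun x => mul_nonneg (sq_nonneg _) (hg.nonneg x))
    ((hg.integrable_sq_mul hu).const_mul _).integrableOn
    (hg.integrable_deriv_sq_mul hu).integrableOn (fun a => ?_) hφ hφ0 hφq
  rw [Measure.restrict_restrict measurableSet_Iic, inter_comm, Ioi_inter_Iic, integral_const_mul]
  rcases le_total 0 a with ha | ha
  · exact hg.poincareConst_mul_setIntegral_Ioc_sq_le hu hu0 ha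
  · simp only [Ioc_eq_empty_of_le ha, setIntegral_empty, mul_zero, le_refl]

theorem poincareConst_mul_integral_sq_le_of_map_zero (hg : IsEvenDensity g) (hφ : Antitone φ)
    (hφ0 : ∀ t, 0 ≤ φ t) (hu : LocallyLipschitz u) (hu0 : u 0 = 0) :
    poincareConst g univ * ∫ x, u x ^ 2 * (φ |x| * g x) ≤
      ∫ x, deriv u x ^ 2 * (φ |x| * g x) := by
  have hgφ := hg.comp_abs_mul hφ hφ0
  have hright := hg.poincareConst_mul_setIntegral_Ioi_sq_le hφ hφ0 hu hu0
  have hleft := hg.poincareConst_mul_setIntegral_Ioi_sq_le hφ hφ0 (u := fun x => u (-x))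
    (hu.comp LocallyLipschitz.id.neg) (by simpa only [neg_zero] using hu0)
  simp only [deriv_comp_neg, neg_sq] at hleft
  rw [integral_eq_integral_Ioi_neg_add_integral_Ioi (hgφ.integrable_sq_mul hu),
    integral_eq_integral_Ioi_neg_add_integral_Ioi (hgφ.integrable_deriv_sq_mul hu), mul_add]
  simp only [abs_neg, hg.even.eq]
  exact add_le_add hleft hright

theorem rayleighQuotients_nonempty (hg : IsEvenDensity g) (hpos : 0 < ∫ x, g x) :
    (rayleighQuotients g).Nonempty := by
  have hint : Integrable fun x => x ^ 2 * g x := hg.integrable_sq_mul LocallyLipschitz.id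
  refine ⟨_, fun x => x, LocallyLipschitz.id, ?_, ?_, hint, rfl⟩
  · exact integral_eq_zero_of_odd fun x => by rw [hg.even.eq, neg_mul]
  · rw [integral_pos_iff_support_of_nonneg hg.nonneg hg.integrable,
      ← measure_sdiff_null (measure_singleton (0 : ℝ))] at hpos
    rw [integral_pos_iff_support_of_nonneg (fun x => mul_nonneg (sq_nonneg _) (hg.nonneg x)) hint]
    exact hpos.trans_le (measure_mono fun x hx => mul_ne_zero (pow_ne_zero 2 hx.2) hx.1)

theorem poincareConst_le_poincareConst_comp_abs_mul (hg : IsEvenDensity g) (hφ : Antitone φ)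
    (hφ0 : ∀ t, 0 ≤ φ t) (hpos : 0 < ∫ x, φ |x| * g x) :
    poincareConst g univ ≤ poincareConst (fun x => φ |x| * g x) univ := by
  have hgφ := hg.comp_abs_mul hφ hφ0
  refine le_poincareConst_univ (hgφ.rayleighQuotients_nonempty hpos) fun f hf hmean _ => ?_
  calc poincareConst g univ * ∫ x, f x ^ 2 * (φ |x| * g x)
      ≤ poincareConst g univ * ∫ x, (f x - f 0) ^ 2 * (φ |x| * g x) :=
        mul_le_mul_of_nonneg_left (hgφ.integral_sq_mul_le_integral_sub_const_sq_mul hf hmean (f 0))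
          (poincareConst_univ_nonneg hg.nonneg)
    _ ≤ ∫ x, deriv (fun x => f x - f 0) x ^ 2 * (φ |x| * g x) :=
        hg.poincareConst_mul_integral_sq_le_of_map_zero hφ hφ0
          (hf.sub (LocallyLipschitz.const (f 0))) (sub_self _)
    _ = ∫ x, deriv f x ^ 2 * (φ |x| * g x) := by simp only [deriv_sub_const]

end IsEvenDensity

theorem antitoneOn_div_of_sturm_comparison {f f' g g' α β : ℝ → ℝ} {a b : ℝ}
    (hf : ∀ t ∈ Icc a b, HasDerivWithinAt f (f' t) (Icc a b) t)
    (hf' : ∀ t ∈ Icc a b, HasDerivWithinAt f' (-(α t) * f t) (Icc a b) t)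
    (hg : ∀ t ∈ Icc a b, HasDerivWithinAt g (g' t) (Icc a b) t)
    (hg' : ∀ t ∈ Icc a b, HasDerivWithinAt g' (-(β t) * g t) (Icc a b) t)
    (hβα : ∀ t ∈ Ioo a b, β t ≤ α t) (hf0 : ∀ t ∈ Ioo a b, 0 ≤ f t)
    (hg0 : ∀ t ∈ Ioc a b, 0 < g t) (hab : f' a * g a ≤ f a * g' a) :
    AntitoneOn (fun t => f t / g t) (Ioc a b) := by
  have hwronskian : ∀ t ∈ Icc a b, HasDerivWithinAt (fun t => f' t * g t - f t * g' t)
      ((β t - α t) * (f t * g t)) (Icc a b) t := fun t ht => by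
    convert! ((hf' t ht).mul (hg t ht)).sub ((hf t ht).mul (hg' t ht)) using 1
    ring
  have hwronskian_anti : AntitoneOn (fun t => f' t * g t - f t * g' t) (Icc a b) := by
    refine antitoneOn_of_hasDerivWithinAt_nonpos (convex_Icc a b)
      (fun t ht => (hwronskian t ht).continuousWithinAt)
      (fun t ht => (hwronskian t (interior_subset ht)).mono interior_subset) fun t ht => ?_
    rw [interior_Icc] at ht
    exact mul_nonpos_of_nonpos_of_nonneg (sub_nonpos.2 (hβα t ht))
      (mul_nonneg (hf0 t ht) (hg0 t (Ioo_subset_Ioc_self ht)).le)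
  have hquotient : ∀ t ∈ Ioc a b, HasDerivWithinAt (fun t => f t / g t)
      ((f' t * g t - f t * g' t) / g t ^ 2) (Ioc a b) t := fun t ht =>
    ((hf t (Ioc_subset_Icc_self ht)).div (hg t (Ioc_subset_Icc_self ht)) (hg0 t ht).ne').mono
      Ioc_subset_Icc_self
  refine antitoneOn_of_hasDerivWithinAt_nonpos (convex_Ioc a b)
    (fun t ht => (hquotient t ht).continuousWithinAt)
    (fun t ht => (hquotient t (interior_subset ht)).mono interior_subset) fun t ht => ?_
  have ht := Ioc_subset_Icc_self (interior_subset ht)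
  exact div_nonpos_of_nonpos_of_nonneg
    ((hwronskian_anti (left_mem_Icc.2 (ht.1.trans ht.2)) ht ht.1).trans (sub_nonpos.2 hab))
    (sq_nonneg _)

section ModelFunctions

variable {κ A B D x : ℝ}

/-- The function `c_κ` (`cos`, `1` or `cosh`), which is the derivative of `s_κ`. -/
noncomputable def cKappa (κ θ : ℝ) : ℝ :=
  if 0 < κ then Real.cos (√κ * θ) else if κ < 0 then Real.cosh (√(-κ) * θ) else 1

theorem sKappa_of_neg (hκ : κ < 0) : sKappa κ = fun x => Real.sinh (√(-κ) * x) / √(-κ) :=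
  funext fun x => by simp [sKappa, hκ, hκ.not_gt]

theorem sKappa_of_pos (hκ : 0 < κ) : sKappa κ = fun x => Real.sin (√κ * x) / √κ :=
  funext fun x => by simp [sKappa, hκ]

theorem sKappa_zero_left : sKappa 0 = id := funext fun x => by simp [sKappa]

theorem sKappa_zero_right (κ : ℝ) : sKappa κ 0 = 0 := by simp [sKappa]

theorem cKappa_of_neg (hκ : κ < 0) : cKappa κ = fun x => Real.cosh (√(-κ) * x) :=
  funext fun x => by simp [cKappa, hκ, hκ.not_gt]

theorem cKappa_of_pos (hκ : 0 < κ) : cKappa κ = fun x => Real.cos (√κ * x) :=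
  funext fun x => by simp [cKappa, hκ]

theorem cKappa_zero_left : cKappa 0 = fun _ => 1 := funext fun x => by simp [cKappa]

theorem hasDerivAt_sKappa (κ x : ℝ) : HasDerivAt (sKappa κ) (cKappa κ x) x := by
  rcases lt_trichotomy κ 0 with hκ | rfl | hκ
  · have hsqrt : √(-κ) ≠ 0 := (Real.sqrt_pos.2 (neg_pos.2 hκ)).ne'
    rw [sKappa_of_neg hκ, cKappa_of_neg hκ]
    simpa [hsqrt] using ((hasDerivAt_id x).const_mul √(-κ)).sinh.div_const √(-κ)
  · rw [sKappa_zero_left, cKappa_zero_left]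
    exact hasDerivAt_id x
  · have hsqrt : √κ ≠ 0 := (Real.sqrt_pos.2 hκ).ne'
    rw [sKappa_of_pos hκ, cKappa_of_pos hκ]
    simpa [hsqrt] using ((hasDerivAt_id x).const_mul √κ).sin.div_const √κ

theorem hasDerivAt_cKappa (κ x : ℝ) : HasDerivAt (cKappa κ) (-κ * sKappa κ x) x := by
  rcases lt_trichotomy κ 0 with hκ | rfl | hκ
  · rw [sKappa_of_neg hκ, cKappa_of_neg hκ, mul_div_left_comm, Real.div_sqrt]
    simpa using ((hasDerivAt_id x).const_mul √(-κ)).cosh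
  · rw [cKappa_zero_left, neg_zero, zero_mul]
    exact hasDerivAt_const x 1
  · rw [sKappa_of_pos hκ, cKappa_of_pos hκ, neg_mul, mul_div_left_comm, Real.div_sqrt]
    simpa using ((hasDerivAt_id x).const_mul √κ).cos

theorem continuous_sKappa (κ : ℝ) : Continuous (sKappa κ) :=
  continuous_iff_continuousAt.2 fun x => (hasDerivAt_sKappa κ x).continuousAt

-- The junk value `√κ = 0` for `κ ≤ 0` makes the bound on `√κ * x` vacuous in that case.
theorem sKappa_pos (hx : 0 < x) (hκx : √κ * x < Real.pi) : 0 < sKappa κ x := by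
  rcases lt_trichotomy κ 0 with hκ | rfl | hκ
  · have hsqrt : 0 < √(-κ) := Real.sqrt_pos.2 (neg_pos.2 hκ)
    rw [sKappa_of_neg hκ]
    exact div_pos (Real.sinh_pos_iff.2 (mul_pos hsqrt hx)) hsqrt
  · rwa [sKappa_zero_left]
  · have hsqrt : 0 < √κ := Real.sqrt_pos.2 hκ
    rw [sKappa_of_pos hκ]
    exact div_pos (Real.sin_pos_of_pos_of_lt_pi (mul_pos hsqrt hx) hκx) hsqrt

theorem sKappa_nonneg (hx : 0 ≤ x) (hκx : √κ * x ≤ Real.pi) : 0 ≤ sKappa κ x := by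
  rcases le_or_gt κ 0 with hκ | hκ
  · rcases hx.eq_or_lt with rfl | hx
    · rw [sKappa_zero_right]
    · exact (sKappa_pos hx (by rw [Real.sqrt_eq_zero_of_nonpos hκ, zero_mul]; exact Real.pi_pos)).le
  · rw [sKappa_of_pos hκ]
    exact div_nonneg (Real.sin_nonneg_of_nonneg_of_le_pi (by positivity) hκx) (Real.sqrt_nonneg κ)

theorem sqrt_mul_le_pi (hD : 0 < κ → D ≤ Real.pi / √κ) : √κ * D ≤ Real.pi := by
  rcases le_or_gt κ 0 with hκ | hκ
  · rw [Real.sqrt_eq_zero_of_nonpos hκ, zero_mul]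
    exact Real.pi_pos.le
  · exact (le_div_iff₀' (Real.sqrt_pos.2 hκ)).1 (hD hκ)

theorem sKappa_mul_nonneg (hD : 0 ≤ D) (hκD : √κ * D ≤ Real.pi) (hx : x ∈ Icc 0 1) :
    0 ≤ sKappa κ (D * x) :=
  sKappa_nonneg (mul_nonneg hD hx.1) <| by
    rw [← mul_assoc]
    exact (mul_le_of_le_one_right (mul_nonneg (Real.sqrt_nonneg κ) hD) hx.2).trans hκD

theorem sKappa_mul_pos (hD : 0 < D) (hκD : √κ * D < Real.pi) (hx : x ∈ Ioc 0 1) :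
    0 < sKappa κ (D * x) :=
  sKappa_pos (mul_pos hD hx.1) <| by
    rw [← mul_assoc]
    exact (mul_le_of_le_one_right (mul_nonneg (Real.sqrt_nonneg κ) hD.le) hx.2).trans_lt hκD

theorem hasDerivAt_sKappa_mul (κ D x : ℝ) :
    HasDerivAt (fun x => sKappa κ (D * x)) (D * cKappa κ (D * x)) x := by
  simpa only [mul_comm, mul_one] using!
    (hasDerivAt_sKappa κ (D * x)).comp x ((hasDerivAt_id x).const_mul D)

theorem hasDerivAt_mul_cKappa_mul (κ D x : ℝ) :
    HasDerivAt (fun x => D * cKappa κ (D * x)) (-(κ * D ^ 2) * sKappa κ (D * x)) x := by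
  convert! ((hasDerivAt_cKappa κ (D * x)).comp x ((hasDerivAt_id x).const_mul D)).const_mul D
    using 1
  ring

theorem antitoneOn_sKappa_div_sKappa (hA : 0 ≤ A) (hB : 0 < B) (hκ : κ * B ^ 2 ≤ κ * A ^ 2)
    (hκA : √κ * A ≤ Real.pi) (hκB : √κ * B < Real.pi) :
    AntitoneOn (fun x => sKappa κ (A * x) / sKappa κ (B * x)) (Ioc 0 1) :=
  antitoneOn_div_of_sturm_comparison (α := fun _ => κ * A ^ 2) (β := fun _ => κ * B ^ 2)
    (fun x _ => (hasDerivAt_sKappa_mul κ A x).hasDerivWithinAt)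
    (fun x _ => (hasDerivAt_mul_cKappa_mul κ A x).hasDerivWithinAt)
    (fun x _ => (hasDerivAt_sKappa_mul κ B x).hasDerivWithinAt)
    (fun x _ => (hasDerivAt_mul_cKappa_mul κ B x).hasDerivWithinAt)
    (fun _ _ => hκ) (fun _ hx => sKappa_mul_nonneg hA hκA (Ioo_subset_Icc_self hx))
    (fun _ hx => sKappa_mul_pos hB hκB hx)
    (by simp only [mul_zero, sKappa_zero_right, zero_mul, le_refl])

end ModelFunctions

/-- The density `h_{K,N,D}` transported from `[0, D]` to `[-1/2, 1/2]`, with `κ = K / (N - 1)` and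
`p = N - 1`. -/
noncomputable def centeredModelDensity (κ p D : ℝ) : ℝ → ℝ :=
  (Icc (-(1 / 2)) (1 / 2)).indicator fun x => sKappa κ (D * (1 / 2 + |x|)) ^ p

section ModelDensity

variable {κ p A B D x : ℝ}

theorem modelDensity_comp_affine (K N : ℝ) (hD : 0 < D) :
    (fun x => modelDensity K N D (D * x + D / 2)) =
      centeredModelDensity (K / (N - 1)) (N - 1) D := by
  funext x
  have hleft : D * x + D / 2 ∈ Icc 0 (D / 2) ↔ x ∈ Icc (-(1 / 2)) 0 := by
    constructor <;> rintro ⟨h, h'⟩ <;> constructor <;> nlinarith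
  have hright : D * x + D / 2 ∈ Icc (D / 2) D ↔ x ∈ Icc 0 (1 / 2) := by
    constructor <;> rintro ⟨h, h'⟩ <;> constructor <;> nlinarith
  have hunion : Icc (-(1 / 2)) (1 / 2) = Icc (-(1 / 2)) 0 ∪ Icc 0 (1 / 2 : ℝ) :=
    (Icc_union_Icc_eq_Icc (by norm_num) (by norm_num)).symm
  rw [modelDensity, if_congr hleft rfl (if_congr hright rfl rfl), centeredModelDensity, hunion]
  by_cases hneg : x ∈ Icc (-(1 / 2)) 0
  · rw [if_pos hneg, indicator_of_mem (mem_union_left _ hneg), abs_of_nonpos hneg.2]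
    ring_nf
  by_cases hpos : x ∈ Icc 0 (1 / 2)
  · rw [if_neg hneg, if_pos hpos, indicator_of_mem (mem_union_right _ hpos),
      abs_of_nonneg hpos.1]
    ring_nf
  · rw [if_neg hneg, if_neg hpos,
      indicator_of_notMem (mt (mem_union _ _ _).1 (not_or_intro hneg hpos))]

theorem half_add_abs_mem_Ioc (hx : x ∈ Icc (-(1 / 2)) (1 / 2)) : 1 / 2 + |x| ∈ Ioc 0 1 :=
  ⟨by positivity, by linarith [abs_le.2 hx]⟩

theorem isEvenDensity_centeredModelDensity (hp : 0 ≤ p) (hD : 0 ≤ D) (hκD : √κ * D ≤ Real.pi) :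
    IsEvenDensity (centeredModelDensity κ p D) where
  nonneg := indicator_nonneg fun _ hx => Real.rpow_nonneg
    (sKappa_mul_nonneg hD hκD (Ioc_subset_Icc_self (half_add_abs_mem_Ioc hx))) p
  even x := by
    have hmem : -x ∈ Icc (-(1 / 2)) (1 / 2) ↔ x ∈ Icc (-(1 / 2) : ℝ) (1 / 2) := by
      rw [neg_mem_Icc_iff, neg_neg]
    simp only [centeredModelDensity, indicator_apply, hmem, abs_neg]
  integrable := by
    have hcont : Continuous fun x : ℝ => sKappa κ (D * (1 / 2 + |x|)) ^ p :=
      ((continuous_sKappa κ).comp (by fun_prop)).rpow_const fun _ => Or.inr hp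
    exact hcont.integrableOn_Icc.integrable_indicator measurableSet_Icc
  hasCompactSupport := HasCompactSupport.intro isCompact_Icc fun _ hx => indicator_of_notMem hx _

theorem integral_centeredModelDensity_pos (hp : 0 ≤ p) (hD : 0 < D) (hκD : √κ * D ≤ Real.pi) :
    0 < ∫ x, centeredModelDensity κ p D x := by
  have hdensity := isEvenDensity_centeredModelDensity hp hD.le hκD
  have hsupport : Ioo (-(1 / 2)) (1 / 2) ⊆ support (centeredModelDensity κ p D) := fun x hx => by
    have habs : 1 / 2 + |x| < 1 := by linarith [abs_lt.2 hx]
    have hlt : √κ * (D * (1 / 2 + |x|)) < Real.pi :=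
      calc √κ * (D * (1 / 2 + |x|)) = √κ * D * (1 / 2 + |x|) := (mul_assoc _ _ _).symm
        _ ≤ Real.pi * (1 / 2 + |x|) := mul_le_mul_of_nonneg_right hκD (by positivity)
        _ < Real.pi := mul_lt_of_lt_one_right Real.pi_pos habs
    rw [mem_support, centeredModelDensity, indicator_of_mem (Ioo_subset_Icc_self hx)]
    exact (Real.rpow_pos_of_pos (sKappa_pos (by positivity) hlt) p).ne'
  rw [integral_pos_iff_support_of_nonneg hdensity.nonneg hdensity.integrable]
  exact ((Measure.measure_Ioo_pos volume).2 (by norm_num)).trans_le (measure_mono hsupport)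

theorem exists_antitone_centeredModelDensity_eq_mul (hp : 0 ≤ p) (hA : 0 ≤ A) (hB : 0 < B)
    (hκ : κ * B ^ 2 ≤ κ * A ^ 2) (hκA : √κ * A ≤ Real.pi) (hκB : √κ * B < Real.pi) :
    ∃ φ : ℝ → ℝ, Antitone φ ∧ (∀ t, 0 ≤ φ t) ∧
      centeredModelDensity κ p A = fun x => φ |x| * centeredModelDensity κ p B x := by
  have hhalf : (0 : ℝ) ≤ 1 / 2 := by norm_num
  have hmem (t : Icc (0 : ℝ) (1 / 2)) : 1 / 2 + (t : ℝ) ∈ Ioc 0 1 :=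
    ⟨by linarith [t.2.1], by linarith [t.2.2]⟩
  have hA0 {t : ℝ} (ht : t ∈ Ioc 0 1) : 0 ≤ sKappa κ (A * t) :=
    sKappa_mul_nonneg hA hκA (Ioc_subset_Icc_self ht)
  have hB0 {t : ℝ} (ht : t ∈ Ioc 0 1) : 0 < sKappa κ (B * t) := sKappa_mul_pos hB hκB ht
  set ψ : Icc (0 : ℝ) (1 / 2) → ℝ := fun t =>
    (sKappa κ (A * (1 / 2 + t)) / sKappa κ (B * (1 / 2 + t))) ^ p with hψ_def
  have hψ0 (t : Icc (0 : ℝ) (1 / 2)) : 0 ≤ ψ t :=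
    Real.rpow_nonneg (div_nonneg (hA0 (hmem t)) (hB0 (hmem t)).le) p
  have hψ : Antitone ψ := fun s t hst =>
    Real.rpow_le_rpow (div_nonneg (hA0 (hmem t)) (hB0 (hmem t)).le)
      (antitoneOn_sKappa_div_sKappa hA hB hκ hκA hκB (hmem s) (hmem t) (by gcongr)) hp
  refine ⟨IccExtend hhalf ψ, hψ.comp_monotone (monotone_projIcc hhalf), fun t => hψ0 _,
    funext fun x => ?_⟩
  by_cases hx : x ∈ Icc (-(1 / 2)) (1 / 2)
  · have hx' := half_add_abs_mem_Ioc hx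
    simp only [centeredModelDensity, indicator_of_mem hx]
    rw [IccExtend_of_mem hhalf ψ ⟨abs_nonneg x, abs_le.2 hx⟩]
    simp only [hψ_def]
    rw [Real.div_rpow (hA0 hx') (hB0 hx').le,
      div_mul_cancel₀ _ (Real.rpow_pos_of_pos (hB0 hx') p).ne']
  · simp only [centeredModelDensity, indicator_of_notMem hx, mul_zero]

theorem poincareConst_centeredModelDensity_le (hp : 0 ≤ p) (hA : 0 < A) (hB : 0 < B)
    (hκ : κ * B ^ 2 ≤ κ * A ^ 2) (hκA : √κ * A ≤ Real.pi) (hκB : √κ * B < Real.pi) :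
    poincareConst (centeredModelDensity κ p B) univ ≤
      poincareConst (centeredModelDensity κ p A) univ := by
  obtain ⟨φ, hφ, hφ0, hAB⟩ :=
    exists_antitone_centeredModelDensity_eq_mul hp hA.le hB hκ hκA hκB
  have hpos := integral_centeredModelDensity_pos hp hA hκA
  rw [hAB] at hpos ⊢
  exact (isEvenDensity_centeredModelDensity hp hB.le hκB.le)
    |>.poincareConst_le_poincareConst_comp_abs_mul hφ hφ0 hpos

theorem sq_mul_poincareConst_modelDensity (K N : ℝ) (hD : 0 < D) :
    D ^ 2 * poincareConst (modelDensity K N D) univ =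
      poincareConst (centeredModelDensity (K / (N - 1)) (N - 1) D) univ := by
  rw [← poincareConst_comp_affine _ hD.ne' (D / 2), modelDensity_comp_affine K N hD]

theorem antitoneOn_poincareConst_centeredModelDensity (hp : 0 ≤ p) (hκ : κ ≤ 0) :
    AntitoneOn (fun D => poincareConst (centeredModelDensity κ p D) univ) (Ioi 0) :=
  fun A hA B hB hAB => by
    have hsqrt (D : ℝ) : √κ * D < Real.pi := by
      rw [Real.sqrt_eq_zero_of_nonpos hκ, zero_mul]
      exact Real.pi_pos
    exact poincareConst_centeredModelDensity_le hp hA hB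
      (mul_le_mul_of_nonpos_left (pow_le_pow_left₀ (le_of_lt hA) hAB 2) hκ) (hsqrt A).le (hsqrt B)

theorem monotoneOn_poincareConst_centeredModelDensity (hp : 0 ≤ p) (hκ : 0 ≤ κ) :
    MonotoneOn (fun D => poincareConst (centeredModelDensity κ p D) univ)
      {D | 0 < D ∧ √κ * D ≤ Real.pi} := by
  rintro B ⟨hB, -⟩ A ⟨hA, hκA⟩ hBA
  have hsq : κ * B ^ 2 ≤ κ * A ^ 2 := by gcongr
  rcases hBA.eq_or_lt with rfl | hBA
  · exact le_rfl
  have hκB : √κ * B < Real.pi := by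
    rcases hκ.eq_or_lt with rfl | hκ
    · simpa only [Real.sqrt_zero, zero_mul] using Real.pi_pos
    · exact (mul_lt_mul_of_pos_left hBA (Real.sqrt_pos.2 hκ)).trans_le hκA
  exact poincareConst_centeredModelDensity_le hp hA hB hsq hκA hκB

end ModelDensity

/-- Monotonicity of `D' ↦ (D')² λ[h_{K,N,D'}]` (Lemma 4.11). -/
theorem stmt_10 (K N : ℝ) (hN : 1 < N) :
    (K ≤ 0 → AntitoneOn (fun D => D ^ 2 * poincareConst (modelDensity K N D) Set.univ)
        {D : ℝ | 0 < D ∧ (0 < K → D ≤ Real.pi / Real.sqrt (K / (N - 1)))}) ∧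
    (0 ≤ K → MonotoneOn (fun D => D ^ 2 * poincareConst (modelDensity K N D) Set.univ)
        {D : ℝ | 0 < D ∧ (0 < K → D ≤ Real.pi / Real.sqrt (K / (N - 1)))}) ∧
    (K = 0 → ∀ D₁ : ℝ, 0 < D₁ → ∀ D₂ : ℝ, 0 < D₂ →
        D₁ ^ 2 * poincareConst (modelDensity K N D₁) Set.univ
          = D₂ ^ 2 * poincareConst (modelDensity K N D₂) Set.univ) := by
  have hp : 0 < N - 1 := sub_pos.2 hN
  have hcentered : EqOn (fun D => poincareConst (centeredModelDensity (K / (N - 1)) (N - 1) D) univ)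
      (fun D => D ^ 2 * poincareConst (modelDensity K N D) univ) (Ioi 0) := fun D hD =>
    (sq_mul_poincareConst_modelDensity K N hD).symm
  have hanti (hK : K ≤ 0) := (antitoneOn_poincareConst_centeredModelDensity hp.le
    (div_nonpos_of_nonpos_of_nonneg hK hp.le)).congr hcentered
  have hmono (hK : 0 ≤ K) := (monotoneOn_poincareConst_centeredModelDensity hp.le
    (div_nonneg hK hp.le)).congr (hcentered.mono fun D hD => hD.1)
  have hmem {D : ℝ} (hD : 0 < D) (hDK : 0 < K → D ≤ Real.pi / √(K / (N - 1))) :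
      0 < D ∧ √(K / (N - 1)) * D ≤ Real.pi :=
    ⟨hD, sqrt_mul_le_pi fun hκ => hDK ((div_pos_iff_of_pos_right hp).1 hκ)⟩
  refine ⟨fun hK => (hanti hK).mono fun D hD => hD.1,
    fun hK => (hmono hK).mono fun D hD => hmem hD.1 hD.2, fun hK D₁ hD₁ D₂ hD₂ => ?_⟩
  have hmem₀ {D : ℝ} (hD : 0 < D) := hmem hD fun hK' => absurd hK hK'.ne'
  rcases le_total D₁ D₂ with h | h
  · exact (hmono hK.ge (hmem₀ hD₁) (hmem₀ hD₂) h).antisymm (hanti hK.le hD₁ hD₂ h)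
  · exact (hanti hK.le hD₂ hD₁ h).antisymm (hmono hK.ge (hmem₀ hD₂) (hmem₀ hD₁) h)
end

section
/- Let K > 0 and N ∈ (1,∞). Then λ[h_{K,N,D_{K,N}}] = (N/(N−1))·K; equivalently, the Poincaré constant of the density x ↦ sin(√(K/(N−1))·x)^{N−1} on [0, π/√(K/(N−1))] equals (N/(N−1))·K. -/
open MeasureTheory Filter

/-!
Picone's identity drives the lower bound. If `φ` solves `(w φ')' = -lam * w φ` with `w φ' = 0` at
both endpoints, then

  `g' ^ 2 * w - lam * (g ^ 2 * w) = w * (g' - g φ' / φ) ^ 2 + (g ^ 2 / φ * (w φ'))'`,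

and the last term integrates to zero as soon as `g = O(φ)`, because `g ^ 2 / φ` is then Lipschitz
even across the zeros of `φ`. When `φ` has a single simple zero `m`, this applies to `g = f - f m`
for every Lipschitz `f`, and subtracting a constant from a mean-zero `f` only increases
`∫ f ^ 2 w`. Equality holds for `f = φ`. For the weight `sin (s x) ^ (n - 1)` take
`φ = cos (s x)`, whose flux `w φ' = -s * sin (s x) ^ n` yields `lam = n * s ^ 2`.
-/

open Set Topology NNReal

theorem locLipschitzOn_iff_locallyLipschitzOn {f : ℝ → ℝ} {I : Set ℝ} :
    LocLipschitzOn f I ↔ LocallyLipschitzOn I f := by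
  refine forall₂_congr fun x _ => ⟨?_, ?_⟩
  · rintro ⟨ε, hε, C, hC⟩
    exact ⟨C, _, inter_mem_nhdsWithin I (Metric.ball_mem_nhds x hε), hC⟩
  · rintro ⟨C, t, ht, hC⟩
    obtain ⟨ε, hε, hball⟩ := Metric.mem_nhdsWithin_iff.1 ht
    exact ⟨ε, hε, C, hC.mono (inter_comm I _ ▸ hball)⟩

theorem LocLipschitzOn.exists_lipschitzOnWith {f : ℝ → ℝ} {I S : Set ℝ} (hf : LocLipschitzOn f I)
    (hS : IsCompact S) (hSI : S ⊆ I) : ∃ C, LipschitzOnWith C f S :=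
  ((locLipschitzOn_iff_locallyLipschitzOn.1 hf).mono hSI).exists_lipschitzOnWith_of_compact hS

theorem locLipschitzOn_of_lipschitzOnWith {f : ℝ → ℝ} {I : Set ℝ} {C : ℝ≥0}
    (hf : LipschitzOnWith C f I) : LocLipschitzOn f I :=
  fun _ _ => ⟨1, one_pos, C, hf.mono inter_subset_left⟩

theorem exists_lipschitzOnWith_of_hasDerivWithinAt {f f' : ℝ → ℝ} {S : Set ℝ} (hS : Convex ℝ S)
    (hS' : IsCompact S) (hf : ∀ x ∈ S, HasDerivWithinAt f (f' x) S x) (hf' : ContinuousOn f' S) :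
    ∃ C, LipschitzOnWith C f S := by
  obtain ⟨C, hC⟩ := hS'.exists_bound_of_continuousOn hf'
  refine ⟨C.toNNReal, hS.lipschitzOnWith_of_nnnorm_hasDerivWithin_le hf fun x hx => ?_⟩
  exact NNReal.coe_le_coe.1 ((hC x hx).trans (Real.le_coe_toNNReal C))

-- With `r = f / g` we have `f ^ 2 / g = r * f` and `f = r * g`, which turns the increment into
-- `(r x + r y) * (f x - f y) - r x * r y * (g x - g y)`.
theorem lipschitzOnWith_sq_div {α : Type*} [PseudoMetricSpace α] {f g : α → ℝ} {S : Set α}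
    {C L M : ℝ≥0} (hf : LipschitzOnWith C f S) (hg : LipschitzOnWith L g S)
    (hfg : ∀ x ∈ S, |f x| ≤ M * |g x|) :
    LipschitzOnWith (2 * M * C + M ^ 2 * L) (fun x => f x ^ 2 / g x) S := by
  set r : α → ℝ := fun x => f x / g x with hr
  have sq_div_eq (x : α) : f x ^ 2 / g x = r x * f x := by rw [sq, mul_div_right_comm]
  have r_le : ∀ x ∈ S, |r x| ≤ M := fun x hx => by
    rw [hr, abs_div]
    exact div_le_of_le_mul₀ (abs_nonneg _) M.coe_nonneg (hfg x hx)
  have f_eq : ∀ x ∈ S, f x = r x * g x := fun x hx => by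
    rcases eq_or_ne (g x) 0 with h | h
    · have := hfg x hx
      rw [h, abs_zero, mul_zero, abs_nonpos_iff] at this
      rw [this, h, mul_zero]
    · exact (div_mul_cancel₀ _ h).symm
  refine LipschitzOnWith.of_dist_le_mul fun x hx y hy => ?_
  have increment : f x ^ 2 / g x - f y ^ 2 / g y
      = (r x + r y) * (f x - f y) - r x * r y * (g x - g y) := by
    rw [sq_div_eq, sq_div_eq, f_eq x hx, f_eq y hy]
    ring
  have hfxy : |f x - f y| ≤ C * dist x y := hf.dist_le_mul x hx y hy
  have hgxy : |g x - g y| ≤ L * dist x y := hg.dist_le_mul x hx y hy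
  rw [Real.dist_eq, increment]
  calc |(r x + r y) * (f x - f y) - r x * r y * (g x - g y)|
      ≤ |(r x + r y) * (f x - f y)| + |r x * r y * (g x - g y)| := abs_sub _ _
    _ ≤ (|r x| + |r y|) * |f x - f y| + |r x| * |r y| * |g x - g y| := by
        simp only [abs_mul]
        gcongr
        exact abs_add_le _ _
    _ ≤ ((M : ℝ) + M) * (C * dist x y) + M * M * (L * dist x y) := by
        gcongr <;> exact r_le _ ‹_›
    _ = (2 * M * C + M ^ 2 * L : ℝ≥0) * dist x y := by push_cast; ring

theorem ne_zero_of_abs_sub_le {x m y M : ℝ} (hxm : x ≠ m) (hy : |x - m| ≤ M * |y|) : y ≠ 0 := by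
  rintro rfl
  rw [abs_zero, mul_zero, abs_nonpos_iff, sub_eq_zero] at hy
  exact hxm hy

theorem intervalIntegrable_sq_deriv_mul {f w : ℝ → ℝ} {C : ℝ≥0} {a b : ℝ} (hab : a ≤ b)
    (hf : LipschitzOnWith C f (Icc a b)) (hw : ContinuousOn w (Icc a b)) :
    IntervalIntegrable (fun x => deriv f x ^ 2 * w x) volume a b := by
  rw [← uIcc_of_le hab] at hf hw
  have hf' := hf.absolutelyContinuousOnInterval.intervalIntegrable_deriv
  refine IntervalIntegrable.mul_continuousOn ?_ hw
  rw [intervalIntegrable_iff, uIoc_of_le hab, integrableOn_Ioc_iff_integrableOn_Ioo] at hf' ⊢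
  rw [uIcc_of_le hab] at hf
  simp only [sq]
  refine Integrable.bdd_mul (c := C) hf' hf'.aestronglyMeasurable ?_
  filter_upwards [ae_restrict_mem measurableSet_Ioo] with x hx
  exact norm_deriv_le_of_lipschitzOn (Icc_mem_nhds hx.1 hx.2) hf

theorem integral_sq_mul_le_integral_sub_sq_mul {f w : ℝ → ℝ} {a b : ℝ} (hab : a ≤ b)
    (hf : ContinuousOn f (Icc a b)) (hw : ContinuousOn w (Icc a b))
    (hw0 : ∀ x ∈ Icc a b, 0 ≤ w x) (hf0 : ∫ x in a..b, f x * w x = 0) (c : ℝ) :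
    ∫ x in a..b, f x ^ 2 * w x ≤ ∫ x in a..b, (f x - c) ^ 2 * w x := by
  have int_sq : IntervalIntegrable (fun x => f x ^ 2 * w x) volume a b :=
    ((hf.pow 2).mul hw).intervalIntegrable_of_Icc hab
  have int_mul : IntervalIntegrable (fun x => f x * w x) volume a b :=
    (hf.mul hw).intervalIntegrable_of_Icc hab
  have int_w : IntervalIntegrable w volume a b := hw.intervalIntegrable_of_Icc hab
  have expand (x : ℝ) :
      (f x - c) ^ 2 * w x = f x ^ 2 * w x - 2 * c * (f x * w x) + c ^ 2 * w x := by ring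
  simp only [expand]
  rw [intervalIntegral.integral_add (int_sq.sub (int_mul.const_mul _)) (int_w.const_mul _),
    intervalIntegral.integral_sub int_sq (int_mul.const_mul _),
    intervalIntegral.integral_const_mul, intervalIntegral.integral_const_mul, hf0, mul_zero,
    sub_zero]
  exact le_add_of_nonneg_right
    (mul_nonneg (sq_nonneg c) (intervalIntegral.integral_nonneg hab hw0))

theorem slopeOn_eq_limsup_of_mem_nhds {I : Set ℝ} {x : ℝ} (hI : I ∈ 𝓝 x) (f : ℝ → ℝ) :
    slopeOn f I x = limsup (fun y => |f y - f x| / |y - x|) (𝓝[≠] x) := by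
  rw [slopeOn, sdiff_eq, inter_comm, nhdsWithin_inter_of_mem' (mem_nhdsWithin_of_mem_nhds hI)]

theorem slopeOn_congr_of_mem_nhds {f g : ℝ → ℝ} {I J : Set ℝ} {x : ℝ} (hI : I ∈ 𝓝 x)
    (hJ : J ∈ 𝓝 x) (hfg : f =ᶠ[𝓝 x] g) : slopeOn f I x = slopeOn g J x := by
  rw [slopeOn_eq_limsup_of_mem_nhds hI, slopeOn_eq_limsup_of_mem_nhds hJ]
  refine limsup_congr ?_
  filter_upwards [hfg.filter_mono nhdsWithin_le_nhds] with y hy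
  rw [hy, hfg.eq_of_nhds]

theorem slopeOn_eq_abs_of_hasDerivAt {f : ℝ → ℝ} {I : Set ℝ} {x f' : ℝ} (hI : I ∈ 𝓝 x)
    (hf : HasDerivAt f f' x) : slopeOn f I x = |f'| := by
  rw [slopeOn_eq_limsup_of_mem_nhds hI]
  refine ((hasDerivAt_iff_tendsto_slope.1 hf).abs.congr fun y => ?_).limsup_eq
  rw [slope_def_field, abs_div]

theorem setIntegral_sq_slopeOn_mul_congr {f g : ℝ → ℝ} {S T : Set ℝ} (hS : MeasurableSet S)
    (hS' : volume (frontier S) = 0) (hST : S ⊆ T) (hfg : EqOn f g S) (w : ℝ → ℝ) :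
    ∫ x in S, slopeOn f S x ^ 2 * w x = ∫ x in S, slopeOn g T x ^ 2 * w x := by
  refine setIntegral_congr_ae hS ?_
  filter_upwards [measure_eq_zero_iff_ae_notMem.1 hS'] with x hx hxS
  have hS_nhds : S ∈ 𝓝 x := by
    by_contra h
    exact hx ⟨subset_closure hxS, mt mem_interior_iff_mem_nhds.1 h⟩
  rw [slopeOn_congr_of_mem_nhds hS_nhds (mem_of_superset hS_nhds hST)
    (hfg.eventuallyEq_of_mem hS_nhds)]

theorem setIntegral_sq_slopeOn_mul_eq_deriv {f w : ℝ → ℝ} {C : ℝ≥0} {a b : ℝ} (hab : a ≤ b)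
    (hf : LipschitzOnWith C f (Icc a b)) :
    ∫ x in Icc a b, slopeOn f (Icc a b) x ^ 2 * w x = ∫ x in a..b, deriv f x ^ 2 * w x := by
  rw [intervalIntegral.integral_of_le hab, integral_Icc_eq_integral_Ioo,
    integral_Ioc_eq_integral_Ioo]
  refine setIntegral_congr_ae measurableSet_Ioo ?_
  filter_upwards [hf.ae_differentiableWithinAt_of_mem] with x hfx hx
  have hx_nhds := Icc_mem_nhds hx.1 hx.2
  have hfx' := ((hfx (Ioo_subset_Icc_self hx)).differentiableAt hx_nhds).hasDerivAt
  rw [slopeOn_eq_abs_of_hasDerivAt hx_nhds hfx', sq_abs]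

theorem poincareConst_const_mul {c : ℝ} (hc : 0 < c) (h : ℝ → ℝ) (I : Set ℝ) :
    poincareConst (fun x => c * h x) I = poincareConst h I := by
  have integrableOn_iff (F : ℝ → ℝ) :
      IntegrableOn (fun x => c * F x) I ↔ IntegrableOn F I :=
    integrable_const_mul_iff hc.ne'.isUnit F
  simp only [poincareConst, mul_left_comm _ c, integral_const_mul, integrableOn_iff,
    mul_div_mul_left _ _ hc.ne', mul_pos_iff_of_pos_left hc, mul_eq_zero, hc.ne', false_or]

theorem poincareConst_indicator_univ {S : Set ℝ} (hS : IsCompact S)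
    (hS' : volume (frontier S) = 0) (h : ℝ → ℝ) :
    poincareConst (S.indicator h) univ = poincareConst h S := by
  have integral_eq (F : ℝ → ℝ) : ∫ x, F x * S.indicator h x = ∫ x in S, F x * h x := by
    simp only [← integral_indicator hS.measurableSet, ← indicator_mul_right]
  have integrable_iff (F : ℝ → ℝ) :
      Integrable (fun x => F x * S.indicator h x) ↔ IntegrableOn (fun x => F x * h x) S := by
    simp only [← integrable_indicator_iff hS.measurableSet, ← indicator_mul_right]
  have congr_on {F G : ℝ → ℝ} (hFG : EqOn F G S) :
      ∫ x in S, F x * h x = ∫ x in S, G x * h x :=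
    setIntegral_congr_fun hS.measurableSet fun x hx => congrArg (· * h x) (hFG hx)
  simp only [poincareConst, setIntegral_univ, integrableOn_univ, integral_eq, integrable_iff]
  congr 1
  ext r
  constructor
  · rintro ⟨f, hf, hmean, hpos, hint, rfl⟩
    obtain ⟨C, hC⟩ := hf.exists_lipschitzOnWith hS (subset_univ S)
    refine ⟨f, locLipschitzOn_of_lipschitzOnWith hC, hmean, hpos, hint, ?_⟩
    rw [setIntegral_sq_slopeOn_mul_congr hS.measurableSet hS' (subset_univ S) (eqOn_refl f S)]
  · rintro ⟨f, hf, hmean, hpos, hint, rfl⟩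
    obtain ⟨C, hC⟩ := hf.exists_lipschitzOnWith hS subset_rfl
    obtain ⟨g, hg, hfg⟩ := hC.extend_real
    have hsq : EqOn (fun x => f x ^ 2) (fun x => g x ^ 2) S :=
      fun x hx => congrArg (· ^ 2) (hfg hx)
    refine ⟨g, locLipschitzOn_of_lipschitzOnWith hg.lipschitzOnWith, ?_, ?_, ?_, ?_⟩
    · rw [← congr_on hfg, hmean]
    · rwa [← congr_on hsq]
    · exact hint.congr_fun (fun x hx => congrArg (· * h x) (hsq hx)) hS.measurableSet
    · rw [← congr_on hsq,
        setIntegral_sq_slopeOn_mul_congr hS.measurableSet hS' (subset_univ S) hfg]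

/-- `φ`, with derivative `φ'`, is a Neumann eigenfunction on `[a, b]` of the Sturm–Liouville
operator `u ↦ -(w u')' / w` with eigenvalue `lam`. The boundary condition is the vanishing of the
flux `w φ'`, which is void at an endpoint where `w` vanishes; derivatives are one-sided at `a`
and `b`. -/
structure IsNeumannEigenfunction (w φ φ' : ℝ → ℝ) (lam a b : ℝ) : Prop where
  continuousOn_weight : ContinuousOn w (Icc a b)
  continuousOn_deriv : ContinuousOn φ' (Icc a b)
  hasDerivWithinAt : ∀ x ∈ Icc a b, HasDerivWithinAt φ (φ' x) (Icc a b) x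
  hasDerivWithinAt_flux : ∀ x ∈ Icc a b,
    HasDerivWithinAt (fun x => w x * φ' x) (-(lam * (w x * φ x))) (Icc a b) x
  flux_left : w a * φ' a = 0
  flux_right : w b * φ' b = 0

namespace IsNeumannEigenfunction

variable {w φ φ' : ℝ → ℝ} {lam a b : ℝ}

theorem continuousOn (hφ : IsNeumannEigenfunction w φ φ' lam a b) : ContinuousOn φ (Icc a b) :=
  fun x hx => (hφ.hasDerivWithinAt x hx).continuousWithinAt

theorem continuousOn_flux (hφ : IsNeumannEigenfunction w φ φ' lam a b) :
    ContinuousOn (fun x => w x * φ' x) (Icc a b) :=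
  hφ.continuousOn_weight.mul hφ.continuousOn_deriv

theorem continuousOn_flux_deriv (hφ : IsNeumannEigenfunction w φ φ' lam a b) :
    ContinuousOn (fun x => -(lam * (w x * φ x))) (Icc a b) :=
  (continuousOn_const.mul (hφ.continuousOn_weight.mul hφ.continuousOn)).neg

theorem hasDerivAt (hφ : IsNeumannEigenfunction w φ φ' lam a b) {x : ℝ} (hx : x ∈ Ioo a b) :
    HasDerivAt φ (φ' x) x :=
  (hφ.hasDerivWithinAt x (Ioo_subset_Icc_self hx)).hasDerivAt (Icc_mem_nhds hx.1 hx.2)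

theorem hasDerivAt_flux (hφ : IsNeumannEigenfunction w φ φ' lam a b) {x : ℝ} (hx : x ∈ Ioo a b) :
    HasDerivAt (fun x => w x * φ' x) (-(lam * (w x * φ x))) x :=
  (hφ.hasDerivWithinAt_flux x (Ioo_subset_Icc_self hx)).hasDerivAt (Icc_mem_nhds hx.1 hx.2)

theorem exists_lipschitzOnWith (hφ : IsNeumannEigenfunction w φ φ' lam a b) :
    ∃ L, LipschitzOnWith L φ (Icc a b) :=
  exists_lipschitzOnWith_of_hasDerivWithinAt (convex_Icc a b) isCompact_Icc
    hφ.hasDerivWithinAt hφ.continuousOn_deriv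

theorem exists_lipschitzOnWith_flux (hφ : IsNeumannEigenfunction w φ φ' lam a b) :
    ∃ L, LipschitzOnWith L (fun x => w x * φ' x) (Icc a b) :=
  exists_lipschitzOnWith_of_hasDerivWithinAt (convex_Icc a b) isCompact_Icc
    hφ.hasDerivWithinAt_flux hφ.continuousOn_flux_deriv

theorem integral_mul_eq_zero (hφ : IsNeumannEigenfunction w φ φ' lam a b) (hab : a ≤ b)
    (hlam : lam ≠ 0) : ∫ x in a..b, φ x * w x = 0 := by
  have hflux := intervalIntegral.integral_eq_sub_of_hasDerivAt_of_le hab hφ.continuousOn_flux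
    (fun x hx => hφ.hasDerivAt_flux hx) (hφ.continuousOn_flux_deriv.intervalIntegrable_of_Icc hab)
  rw [hφ.flux_left, hφ.flux_right, sub_zero, intervalIntegral.integral_neg,
    intervalIntegral.integral_const_mul, neg_eq_zero, mul_eq_zero, or_iff_right hlam] at hflux
  simpa only [mul_comm] using hflux

theorem integral_sq_deriv_mul (hφ : IsNeumannEigenfunction w φ φ' lam a b) (hab : a ≤ b) :
    ∫ x in a..b, deriv φ x ^ 2 * w x = lam * ∫ x in a..b, φ x ^ 2 * w x := by
  have hw := hφ.continuousOn_weight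
  have int_sq : IntervalIntegrable (fun x => φ x ^ 2 * w x) volume a b :=
    ((hφ.continuousOn.pow 2).mul hw).intervalIntegrable_of_Icc hab
  have int_deriv_sq : IntervalIntegrable (fun x => φ' x ^ 2 * w x) volume a b :=
    ((hφ.continuousOn_deriv.pow 2).mul hw).intervalIntegrable_of_Icc hab
  have hasDerivAt_mul_flux : ∀ x ∈ Ioo a b, HasDerivAt (fun x => φ x * (w x * φ' x))
      (φ' x ^ 2 * w x - lam * (φ x ^ 2 * w x)) x := fun x hx =>
    ((hφ.hasDerivAt hx).mul (hφ.hasDerivAt_flux hx)).congr_deriv (by ring)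
  have hbdry := intervalIntegral.integral_eq_sub_of_hasDerivAt_of_le hab
    (hφ.continuousOn.mul hφ.continuousOn_flux) hasDerivAt_mul_flux
    (int_deriv_sq.sub (int_sq.const_mul lam))
  simp only [Pi.mul_apply, hφ.flux_left, hφ.flux_right, mul_zero, sub_zero] at hbdry
  rw [intervalIntegral.integral_sub int_deriv_sq (int_sq.const_mul lam),
    intervalIntegral.integral_const_mul, sub_eq_zero] at hbdry
  rw [← hbdry]
  refine intervalIntegral.integral_congr_Ioo_of_le hab fun x hx => ?_
  simp only [(hφ.hasDerivAt hx).deriv]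

theorem hasDerivAt_sq_div_mul_flux (hφ : IsNeumannEigenfunction w φ φ' lam a b) {g : ℝ → ℝ}
    {g' x : ℝ} (hx : x ∈ Ioo a b) (hφx : φ x ≠ 0) (hg : HasDerivAt g g' x) :
    HasDerivAt (fun x => g x ^ 2 / φ x * (w x * φ' x))
      (g' ^ 2 * w x - lam * (g x ^ 2 * w x) - w x * (g' - g x * φ' x / φ x) ^ 2) x := by
  refine (((hg.pow 2).div (hφ.hasDerivAt hx) hφx).mul (hφ.hasDerivAt_flux hx)).congr_deriv ?_
  simp only [Pi.div_apply, Pi.pow_apply]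
  field_simp
  ring

theorem mul_integral_sq_le_of_abs_le (hφ : IsNeumannEigenfunction w φ φ' lam a b) (hab : a ≤ b)
    (hw : ∀ x ∈ Icc a b, 0 ≤ w x) (hφ_ne : ∀ᵐ x, x ∈ Icc a b → φ x ≠ 0) {g : ℝ → ℝ} {C M : ℝ≥0}
    (hg : LipschitzOnWith C g (Icc a b)) (hgφ : ∀ x ∈ Icc a b, |g x| ≤ M * |φ x|) :
    lam * ∫ x in a..b, g x ^ 2 * w x ≤ ∫ x in a..b, deriv g x ^ 2 * w x := by
  obtain ⟨L, hL⟩ := hφ.exists_lipschitzOnWith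
  obtain ⟨P, hP⟩ := hφ.exists_lipschitzOnWith_flux
  set G : ℝ → ℝ := fun x => g x ^ 2 / φ x * (w x * φ' x) with hG
  have hG_ac : AbsolutelyContinuousOnInterval G a b := by
    have hquot := lipschitzOnWith_sq_div hg hL hgφ
    rw [← uIcc_of_le hab] at hquot hP
    exact hquot.absolutelyContinuousOnInterval.fun_mul hP.absolutelyContinuousOnInterval
  have integral_deriv_G : ∫ x in a..b, deriv G x = 0 := by
    rw [hG_ac.integral_deriv_eq_sub]
    simp only [hG, hφ.flux_left, hφ.flux_right, mul_zero, sub_zero]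
  have int_deriv := intervalIntegrable_sq_deriv_mul hab hg hφ.continuousOn_weight
  have int_sq : IntervalIntegrable (fun x => lam * (g x ^ 2 * w x)) volume a b :=
    (((hg.continuousOn.pow 2).mul hφ.continuousOn_weight).intervalIntegrable_of_Icc hab).const_mul _
  have picone : ∀ᵐ x ∂volume.restrict (Icc a b),
      0 ≤ deriv g x ^ 2 * w x - lam * (g x ^ 2 * w x) - deriv G x := by
    rw [← restrict_Ioo_eq_restrict_Icc, ae_restrict_iff' measurableSet_Ioo]
    filter_upwards [hφ_ne, hg.ae_differentiableWithinAt_of_mem] with x hne hdiff hx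
    have hxI := Ioo_subset_Icc_self hx
    have hgx := ((hdiff hxI).differentiableAt (Icc_mem_nhds hx.1 hx.2)).hasDerivAt
    rw [(hφ.hasDerivAt_sq_div_mul_flux hx (hne hxI) hgx).deriv, sub_sub_cancel]
    exact mul_nonneg (hw x hxI) (sq_nonneg _)
  have integral_nonneg := intervalIntegral.integral_nonneg_of_ae_restrict hab picone
  rwa [intervalIntegral.integral_sub (int_deriv.sub int_sq) hG_ac.intervalIntegrable_deriv,
    intervalIntegral.integral_sub int_deriv int_sq, integral_deriv_G, sub_zero,
    intervalIntegral.integral_const_mul, sub_nonneg] at integral_nonneg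

theorem mul_integral_sq_le_of_integral_eq_zero (hφ : IsNeumannEigenfunction w φ φ' lam a b)
    (hab : a ≤ b) (hlam : 0 ≤ lam) (hw : ∀ x ∈ Icc a b, 0 ≤ w x) {m : ℝ} (hm : m ∈ Icc a b)
    {M : ℝ≥0} (hφm : ∀ x ∈ Icc a b, |x - m| ≤ M * |φ x|) {f : ℝ → ℝ} {C : ℝ≥0}
    (hf : LipschitzOnWith C f (Icc a b)) (hf0 : ∫ x in a..b, f x * w x = 0) :
    lam * ∫ x in a..b, f x ^ 2 * w x ≤ ∫ x in a..b, deriv f x ^ 2 * w x := by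
  have hφ_ne : ∀ᵐ x, x ∈ Icc a b → φ x ≠ 0 := by
    filter_upwards [Measure.ae_ne volume m] with x hxm hx
    exact ne_zero_of_abs_sub_le hxm (hφm x hx)
  have hsub : LipschitzOnWith C (fun x => f x - f m) (Icc a b) :=
    LipschitzOnWith.of_dist_le_mul fun x hx y hy => by
      simpa only [dist_sub_right] using hf.dist_le_mul x hx y hy
  have hsub_le : ∀ x ∈ Icc a b, |f x - f m| ≤ ↑(C * M) * |φ x| := fun x hx => calc
    |f x - f m| ≤ C * |x - m| := hf.dist_le_mul x hx m hm
    _ ≤ C * (M * |φ x|) := by gcongr; exact hφm x hx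
    _ = ↑(C * M) * |φ x| := by push_cast; ring
  have poincare_sub := hφ.mul_integral_sq_le_of_abs_le hab hw hφ_ne hsub hsub_le
  simp only [deriv_sub_const_fun] at poincare_sub
  exact (mul_le_mul_of_nonneg_left (integral_sq_mul_le_integral_sub_sq_mul hab hf.continuousOn
    hφ.continuousOn_weight hw hf0 (f m)) hlam).trans poincare_sub

theorem integral_sq_mul_pos (hφ : IsNeumannEigenfunction w φ φ' lam a b) (hab : a < b)
    (hw : ∀ x ∈ Icc a b, 0 ≤ w x) (hpos : ∃ x ∈ Icc a b, φ x ≠ 0 ∧ 0 < w x) :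
    0 < ∫ x in a..b, φ x ^ 2 * w x := by
  obtain ⟨c, hc, hφc, hwc⟩ := hpos
  exact intervalIntegral.integral_pos hab ((hφ.continuousOn.pow 2).mul hφ.continuousOn_weight)
    (fun x hx => mul_nonneg (sq_nonneg _) (hw x (Ioc_subset_Icc_self hx)))
    ⟨c, hc, mul_pos (sq_pos_of_ne_zero hφc) hwc⟩

theorem poincareConst_eq (hφ : IsNeumannEigenfunction w φ φ' lam a b) (hab : a < b)
    (hlam : 0 < lam) (hw : ∀ x ∈ Ioo a b, 0 < w x) {m : ℝ} (hm : m ∈ Icc a b) {M : ℝ≥0}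
    (hφm : ∀ x ∈ Icc a b, |x - m| ≤ M * |φ x|) : poincareConst w (Icc a b) = lam := by
  have hwc := hφ.continuousOn_weight
  have hw0 : ∀ x ∈ Icc a b, 0 ≤ w x := by
    rw [← closure_Ioo hab.ne] at hwc ⊢
    exact fun _ hx => le_on_closure (fun y hy => (hw y hy).le) continuousOn_const hwc hx
  have integral_eq (F : ℝ → ℝ) : ∫ x in Icc a b, F x * w x = ∫ x in a..b, F x * w x := by
    rw [integral_Icc_eq_integral_Ioc, intervalIntegral.integral_of_le hab.le]
  have integral_sq_pos : 0 < ∫ x in a..b, φ x ^ 2 * w x := by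
    obtain ⟨c, hc, hcm⟩ := (Ioo_infinite hab).nontrivial.exists_ne m
    have hcI := Ioo_subset_Icc_self hc
    exact hφ.integral_sq_mul_pos hab hw0 ⟨c, hcI, ne_zero_of_abs_sub_le hcm (hφm c hcI), hw c hc⟩
  refine IsLeast.csInf_eq ⟨?_, ?_⟩
  · obtain ⟨L, hL⟩ := hφ.exists_lipschitzOnWith
    refine ⟨φ, locLipschitzOn_of_lipschitzOnWith hL, ?_, ?_,
      ((hφ.continuousOn.pow 2).mul hφ.continuousOn_weight).integrableOn_Icc, ?_⟩
    · rw [integral_eq, hφ.integral_mul_eq_zero hab.le hlam.ne']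
    · rwa [integral_eq (φ · ^ 2)]
    · rw [integral_eq (φ · ^ 2), setIntegral_sq_slopeOn_mul_eq_deriv hab.le hL,
        hφ.integral_sq_deriv_mul hab.le, mul_div_cancel_right₀ _ integral_sq_pos.ne']
  · rintro _ ⟨f, hf, hmean, hpos, -, rfl⟩
    obtain ⟨C, hC⟩ := hf.exists_lipschitzOnWith isCompact_Icc subset_rfl
    rw [le_div_iff₀ hpos, integral_eq (f · ^ 2), setIntegral_sq_slopeOn_mul_eq_deriv hab.le hC]
    exact hφ.mul_integral_sq_le_of_integral_eq_zero hab.le hlam.le hw0 hm hφm hC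
      (integral_eq f ▸ hmean)

end IsNeumannEigenfunction

theorem sin_mul_pos_of_mem_Ioo {s x : ℝ} (hs : 0 < s) (hx : x ∈ Ioo 0 (Real.pi / s)) :
    0 < Real.sin (s * x) :=
  Real.sin_pos_of_pos_of_lt_pi (mul_pos hs hx.1) ((lt_div_iff₀' hs).1 hx.2)

theorem abs_sub_pi_div_two_le_mul_abs_cos {t : ℝ} (ht : t ∈ Icc 0 Real.pi) :
    |t - Real.pi / 2| ≤ Real.pi / 2 * |Real.cos t| := by
  have jordan := Real.mul_abs_le_abs_sin (x := Real.pi / 2 - t)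
    (abs_le.2 ⟨by linarith [ht.2], by linarith [ht.1]⟩)
  rw [Real.sin_pi_div_two_sub, abs_sub_comm] at jordan
  calc |t - Real.pi / 2| = Real.pi / 2 * (2 / Real.pi * |t - Real.pi / 2|) := by
        field_simp [Real.pi_ne_zero]
    _ ≤ Real.pi / 2 * |Real.cos t| := by gcongr

theorem abs_sub_midpoint_le_mul_abs_cos {s x : ℝ} (hs : 0 < s) (hx : x ∈ Icc 0 (Real.pi / s)) :
    |x - Real.pi / s / 2| ≤ Real.pi / (2 * s) * |Real.cos (s * x)| := by
  have hsx : s * x ∈ Icc 0 Real.pi := ⟨mul_nonneg hs.le hx.1, (le_div_iff₀' hs).1 hx.2⟩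
  calc |x - Real.pi / s / 2| = s⁻¹ * |s * x - Real.pi / 2| := by
        rw [← abs_of_pos (inv_pos.2 hs), ← abs_mul]
        congr 1
        field_simp
    _ ≤ s⁻¹ * (Real.pi / 2 * |Real.cos (s * x)|) := by
        gcongr
        exact abs_sub_pi_div_two_le_mul_abs_cos hsx
    _ = Real.pi / (2 * s) * |Real.cos (s * x)| := by field_simp

theorem hasDerivAt_cos_mul (s x : ℝ) :
    HasDerivAt (fun x => Real.cos (s * x)) (-(s * Real.sin (s * x))) x :=
  ((hasDerivAt_id x).const_mul s).cos.congr_deriv (by simp only [id, mul_one]; ring)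

theorem hasDerivAt_sin_mul_rpow {n : ℝ} (hn : 1 ≤ n) (s x : ℝ) :
    HasDerivAt (fun x => Real.sin (s * x) ^ n)
      (n * s * (Real.sin (s * x) ^ (n - 1) * Real.cos (s * x))) x :=
  (((hasDerivAt_id x).const_mul s).sin.rpow_const (Or.inr hn)).congr_deriv
    (by simp only [id, mul_one]; ring)

theorem rpow_sub_one_mul_self {n : ℝ} (hn : n ≠ 0) (x : ℝ) : x ^ (n - 1) * x = x ^ n := by
  rcases eq_or_ne x 0 with rfl | hx
  · rw [mul_zero, Real.zero_rpow hn]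
  · rw [← Real.rpow_add_one hx, sub_add_cancel]

theorem isNeumannEigenfunction_cos {s n : ℝ} (hs : s ≠ 0) (hn : 1 ≤ n) :
    IsNeumannEigenfunction (fun x => Real.sin (s * x) ^ (n - 1)) (fun x => Real.cos (s * x))
      (fun x => -(s * Real.sin (s * x))) (n * s ^ 2) 0 (Real.pi / s) := by
  have hn0 : n ≠ 0 := by linarith
  have flux_eq (x : ℝ) : Real.sin (s * x) ^ (n - 1) * -(s * Real.sin (s * x))
      = -s * Real.sin (s * x) ^ n := by
    rw [← rpow_sub_one_mul_self hn0]; ring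
  refine ⟨?_, by fun_prop, fun x _ => (hasDerivAt_cos_mul s x).hasDerivWithinAt, fun x _ => ?_,
    ?_, ?_⟩
  · have : Continuous fun x => Real.sin (s * x) := by fun_prop
    exact (this.rpow_const fun _ => Or.inr (sub_nonneg.2 hn)).continuousOn
  · simp only [flux_eq]
    exact ((hasDerivAt_sin_mul_rpow hn s x).const_mul (-s)).congr_deriv (by ring)
      |>.hasDerivWithinAt
  · rw [flux_eq, mul_zero, Real.sin_zero, Real.zero_rpow hn0, mul_zero]
  · rw [flux_eq, mul_div_cancel₀ _ hs, Real.sin_pi, Real.zero_rpow hn0, mul_zero]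

theorem poincareConst_sin_mul_rpow {s n : ℝ} (hs : 0 < s) (hn : 1 ≤ n) :
    poincareConst (fun x => Real.sin (s * x) ^ (n - 1)) (Icc 0 (Real.pi / s)) = n * s ^ 2 := by
  have hD : 0 < Real.pi / s := div_pos Real.pi_pos hs
  have hM : 0 ≤ Real.pi / (2 * s) := by positivity
  exact (isNeumannEigenfunction_cos hs.ne' hn).poincareConst_eq hD (by positivity)
    (fun x hx => Real.rpow_pos_of_pos (sin_mul_pos_of_mem_Ioo hs hx) _)
    (m := Real.pi / s / 2) ⟨(half_pos hD).le, half_le_self hD.le⟩ (M := ⟨_, hM⟩)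
    fun _ hx => abs_sub_midpoint_le_mul_abs_cos hs hx

-- On the left half `modelDensity` is written with `D - x`; at `D = π / √κ` the symmetry
-- `sin (π - t) = sin t` merges both branches.
theorem modelDensity_eq_indicator {K N : ℝ} (hκ : 0 < K / (N - 1)) :
    modelDensity K N (Real.pi / √(K / (N - 1)))
      = (Icc 0 (Real.pi / √(K / (N - 1)))).indicator
        (fun x => (√(K / (N - 1)) ^ (N - 1))⁻¹ * Real.sin (√(K / (N - 1)) * x) ^ (N - 1)) := by
  ext x
  have hs : 0 < √(K / (N - 1)) := Real.sqrt_pos.2 hκ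
  simp only [modelDensity, sKappa, if_pos hκ]
  set s := √(K / (N - 1))
  have hD : 0 < Real.pi / s := div_pos Real.pi_pos hs
  have reflect : Real.sin (s * (Real.pi / s - x)) = Real.sin (s * x) := by
    rw [mul_sub, mul_div_cancel₀ _ hs.ne', Real.sin_pi_sub]
  have halves : x ∈ Icc 0 (Real.pi / s) ↔
      x ∈ Icc 0 (Real.pi / s / 2) ∨ x ∈ Icc (Real.pi / s / 2) (Real.pi / s) := by
    rw [← mem_union, Icc_union_Icc_eq_Icc (half_pos hD).le (half_le_self hD.le)]
  simp only [reflect, ← ite_or, ← halves, indicator_apply]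
  refine ite_congr rfl (fun hx => ?_) fun _ => rfl
  have hsin : 0 ≤ Real.sin (s * x) :=
    Real.sin_nonneg_of_nonneg_of_le_pi (mul_nonneg hs.le hx.1) ((le_div_iff₀' hs).1 hx.2)
  rw [Real.div_rpow hsin hs.le, div_eq_inv_mul]

/-- `λ[h_{K,N,D_{K,N}}] = N K /(N-1)` (Lemma 5.6). -/
theorem stmt_16 (K N : ℝ) (hK : 0 < K) (hN : 1 < N) :
    poincareConst (modelDensity K N (Real.pi / Real.sqrt (K / (N - 1)))) Set.univ
        = N / (N - 1) * K ∧
    poincareConst (fun x => Real.sin (Real.sqrt (K / (N - 1)) * x) ^ (N - 1))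
        (Set.Icc 0 (Real.pi / Real.sqrt (K / (N - 1))))
        = N / (N - 1) * K := by
  have hκ : 0 < K / (N - 1) := div_pos hK (sub_pos.2 hN)
  have hs : 0 < √(K / (N - 1)) := Real.sqrt_pos.2 hκ
  have eigenvalue : N * √(K / (N - 1)) ^ 2 = N / (N - 1) * K := by
    rw [Real.sq_sqrt hκ.le]; ring
  have sine_weight := eigenvalue ▸ poincareConst_sin_mul_rpow hs hN.le
  refine ⟨?_, sine_weight⟩
  rw [modelDensity_eq_indicator hκ,
    poincareConst_indicator_univ isCompact_Icc ((convex_Icc _ _).addHaar_frontier volume),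
    poincareConst_const_mul (inv_pos.2 (Real.rpow_pos_of_pos hs _)), sine_weight]
end
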